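/- arXiv:1910.04401 — 2 statements merged into one kernel-verified Lean document; each statement's English description precedes it below -/
import Mathlib

section
/- A man m and woman w are stable partners (matched in some stable matching) if and only if the pair (w,m) appears in some rotation in Π, or m and w are matched in the woman-optimal stable matching. -/
/-- A matching market: men `M` and women `W`; each man has a strict preference
order over `W ∪ {∅}` and each woman over `M ∪ {∅}`, encoded by injective rank
functions (a strictly higher rank means strictly more preferred); `none`
plays the role of `∅` (being unmatched), and partners ranked below `none`
are unacceptable. -/
structure Market (M W : Type*) where
  mRank : M → Option W → ℕ
  wRank : W → Option M → ℕ
  mRank_inj : ∀ m, Function.Injective (mRank m)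
  wRank_inj : ∀ w, Function.Injective (wRank w)

/-- A matching: `mu` assigns each man a woman or `none`, `nu` assigns each
woman a man or `none`, and `μ(m) = w ↔ μ(w) = m`. -/
structure Matching (M W : Type*) where
  mu : M → Option W
  nu : W → Option M
  consistent : ∀ m w, mu m = some w ↔ nu w = some m

variable {M W : Type*}

/-- Every matched agent prefers their partner to `∅`. -/
def Market.IndivRational (mkt : Market M W) (μ : Matching M W) : Prop :=
  (∀ m w, μ.mu m = some w → mkt.mRank m none < mkt.mRank m (some w)) ∧
  (∀ w m, μ.nu w = some m → mkt.wRank w none < mkt.wRank w (some m))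

/-- `(m, w)` is a blocking pair for `μ`: they are not matched to each other,
`w ≻_m μ(m)` and `m ≻_w μ(w)`. -/
def Market.Blocking (mkt : Market M W) (μ : Matching M W) (m : M) (w : W) : Prop :=
  μ.mu m ≠ some w ∧
  mkt.mRank m (μ.mu m) < mkt.mRank m (some w) ∧
  mkt.wRank w (μ.nu w) < mkt.wRank w (some m)

/-- A matching is stable if it is individually rational and has no blocking pair. -/
def Market.Stable (mkt : Market M W) (μ : Matching M W) : Prop :=
  mkt.IndivRational μ ∧ ∀ m w, ¬ mkt.Blocking μ m w

/-- Woman-dominance: `μ ≥ μ'` iff every woman weakly prefers her partner in `μ`. -/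
def Market.Dom (mkt : Market M W) (μ μ' : Matching M W) : Prop :=
  ∀ w, mkt.wRank w (μ'.nu w) ≤ mkt.wRank w (μ.nu w)

/-- Strict woman-dominance: `μ > μ'`. -/
def Market.StrictDom (mkt : Market M W) (μ μ' : Matching M W) : Prop :=
  mkt.Dom μ μ' ∧ μ ≠ μ'

/-- `μ'` covers `μ` in the woman-dominance order on stable matchings. -/
def Market.Covers (mkt : Market M W) (μ' μ : Matching M W) : Prop :=
  mkt.StrictDom μ' μ ∧
  ¬ ∃ μ'' : Matching M W, mkt.Stable μ'' ∧ mkt.StrictDom μ' μ'' ∧ mkt.StrictDom μ'' μ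

/-- `μ'` is the elimination of the list `ρ = [(w_0,m_0),…,(w_{k-1},m_{k-1})]`
from `μ`: `k ≥ 2`, the women (resp. men) in `ρ` are distinct, `μ(w_i) = m_i`,
`μ'(m_i) = w_{(i+1) mod k}`, and every agent not appearing in `ρ` has the same
partner in `μ` and `μ'`. -/
def Matching.IsElimOf (μ' μ : Matching M W) (ρ : List (W × M)) : Prop :=
  2 ≤ ρ.length ∧
  (ρ.map Prod.fst).Nodup ∧ (ρ.map Prod.snd).Nodup ∧
  (∀ i : Fin ρ.length, μ.nu (ρ.get i).1 = some (ρ.get i).2) ∧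
  (∀ i : Fin ρ.length, μ'.mu (ρ.get i).2 =
    some (ρ.get ⟨(i.1 + 1) % ρ.length,
      Nat.mod_lt _ (Nat.lt_of_le_of_lt (Nat.zero_le _) i.isLt)⟩).1) ∧
  (∀ m : M, m ∉ ρ.map Prod.snd → μ'.mu m = μ.mu m) ∧
  (∀ w : W, w ∉ ρ.map Prod.fst → μ'.nu w = μ.nu w)

/-- `ρ` is a rotation exposed in `μ`: the elimination of `ρ` from `μ` is a
stable matching which covers `μ`. -/
def Market.ExposedRotation (mkt : Market M W) (μ : Matching M W) (ρ : List (W × M)) : Prop :=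
  ∃ μ' : Matching M W, Matching.IsElimOf μ' μ ρ ∧ mkt.Stable μ' ∧ mkt.Covers μ' μ

/-- `ρ` belongs to the set `Π` of all rotations, i.e. it is exposed in some
stable matching. -/
def Market.InPi (mkt : Market M W) (ρ : List (W × M)) : Prop :=
  ∃ μ : Matching M W, mkt.Stable μ ∧ mkt.ExposedRotation μ ρ

/-- The cyclically next index in a rotation. -/
def RotNext (ρ : List (W × M)) (i : Fin ρ.length) : Fin ρ.length :=
  ⟨(i.1 + 1) % ρ.length, Nat.mod_lt _ (Nat.lt_of_le_of_lt (Nat.zero_le _) i.isLt)⟩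

/-- The cyclically previous index in a rotation. -/
def RotPrev (ρ : List (W × M)) (i : Fin ρ.length) : Fin ρ.length :=
  ⟨(i.1 + ρ.length - 1) % ρ.length, Nat.mod_lt _ (Nat.lt_of_le_of_lt (Nat.zero_le _) i.isLt)⟩

/-- `ρ` moves man `m` from `w` to `w'` (i.e. `m = m_i`, `w = w_i`, `w' = w_{i+1}`). -/
def MovesManFromTo (ρ : List (W × M)) (m : M) (w w' : W) : Prop :=
  ∃ i : Fin ρ.length, (ρ.get i).2 = m ∧ (ρ.get i).1 = w ∧ (ρ.get (RotNext ρ i)).1 = w'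

/-- `ρ` moves woman `w` from `m` to `m'` (i.e. `w = w_i`, `m = m_i`, `m' = m_{i-1}`). -/
def MovesWomanFromTo (ρ : List (W × M)) (w : W) (m m' : M) : Prop :=
  ∃ i : Fin ρ.length, (ρ.get i).1 = w ∧ (ρ.get i).2 = m ∧ (ρ.get (RotPrev ρ i)).2 = m'

/-- `ρ1` is a type 1 predecessor of `ρ2`: `ρ1` moves some man `m` to a woman
`w` and the pair `(w, m)` appears in `ρ2`. -/
def Market.Type1Pred (_mkt : Market M W) (ρ1 ρ2 : List (W × M)) : Prop :=
  ∃ (w : W) (m : M), (∃ w0 : W, MovesManFromTo ρ1 m w0 w) ∧ (w, m) ∈ ρ2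

/-- `ρ1` is a type 2 predecessor of `ρ2`: `ρ1` moves some woman `w` from a man
strictly below `m` to a man strictly above `m`, and `ρ2` moves `m` from a woman
strictly above `w` to a woman strictly below `w`. -/
def Market.Type2Pred (mkt : Market M W) (ρ1 ρ2 : List (W × M)) : Prop :=
  ∃ (m : M) (w : W) (mlo mhi : M) (whi wlo : W),
    MovesWomanFromTo ρ1 w mlo mhi ∧
    mkt.wRank w (some mlo) < mkt.wRank w (some m) ∧
    mkt.wRank w (some m) < mkt.wRank w (some mhi) ∧
    MovesManFromTo ρ2 m whi wlo ∧
    mkt.mRank m (some wlo) < mkt.mRank m (some w) ∧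
    mkt.mRank m (some w) < mkt.mRank m (some whi)

/-- `ρ1` is a (type 1 or type 2) predecessor of `ρ2`; these are the edges of
the predecessor graph `G(Π)`. -/
def Market.Pred (mkt : Market M W) (ρ1 ρ2 : List (W × M)) : Prop :=
  mkt.Type1Pred ρ1 ρ2 ∨ mkt.Type2Pred ρ1 ρ2

/-- `σ` assigns each woman the more preferred of her partners in `μ` and `μ'`. -/
def Market.IsJoin (mkt : Market M W) (μ μ' σ : Matching M W) : Prop :=
  ∀ w, σ.nu w = if mkt.wRank w (μ'.nu w) ≤ mkt.wRank w (μ.nu w) then μ.nu w else μ'.nu w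

/-- `σ` assigns each woman the less preferred of her partners in `μ` and `μ'`. -/
def Market.IsMeet (mkt : Market M W) (μ μ' σ : Matching M W) : Prop :=
  ∀ w, σ.nu w = if mkt.wRank w (μ.nu w) ≤ mkt.wRank w (μ'.nu w) then μ.nu w else μ'.nu w

/-!
If `ν` strictly dominates `μ`, both stable, send each woman whose partner changes, and who is
matched to `m` in `μ`, to the favourite of `m` among the women who prefer him to their partner in
`μ`. This maps the changed women to themselves, so it has a cycle, and shifting the men of `μ` along
that cycle gives a stable matching strictly above `μ` and weakly below `ν`. If `ν` covers `μ`, this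
matching is `ν` itself, so a cover is the elimination of a single rotation containing every changed
woman with her partner in `μ`. A stable pair not matched in the woman-optimal matching is therefore
broken by a rotation exposed in a maximal stable matching containing the pair.
-/

theorem exists_mem_periodicPts_of_mapsTo {α : Type*} {s : Set α} (hs : s.Finite)
    (hne : s.Nonempty) {f : α → α} (hf : Set.MapsTo f s s) :
    ∃ x ∈ s, x ∈ Function.periodicPts f := by
  obtain ⟨a, ha⟩ := hne
  obtain ⟨i, j, hij, heq⟩ :=
    hs.exists_lt_map_eq_of_forall_mem (f := fun n => f^[n] a) fun n => hf.iterate n ha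
  refine ⟨f^[i] a, hf.iterate i ha, Function.mk_mem_periodicPts (Nat.sub_pos_of_lt hij) ?_⟩
  change f^[j - i] (f^[i] a) = f^[i] a
  rw [← Function.iterate_add_apply, Nat.sub_add_cancel hij.le]
  exact heq.symm

theorem exists_nodup_formPerm_eq_of_mapsTo {α : Type*} [DecidableEq α] {s : Set α} (hs : s.Finite)
    (hne : s.Nonempty) {f : α → α} (hf : Set.MapsTo f s s) :
    ∃ l : List α, l ≠ [] ∧ l.Nodup ∧ ∀ x ∈ l, x ∈ s ∧ l.formPerm x = f x := by
  obtain ⟨x, hxs, hper⟩ := exists_mem_periodicPts_of_mapsTo hs hne hf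
  have hpos := Function.minimalPeriod_pos_of_mem_periodicPts hper
  set l := (List.range (Function.minimalPeriod f x)).map fun n => f^[n] x with hl
  have hnd : l.Nodup := List.nodup_range.map_on fun m hm n hn h =>
    Function.iterate_injOn_Iio_minimalPeriod (List.mem_range.1 hm) (List.mem_range.1 hn) h
  refine ⟨l, by simpa [hl] using hpos.ne', hnd, fun y hy => ?_⟩
  obtain ⟨n, hn, rfl⟩ := List.getElem_of_mem hy
  rw [List.formPerm_apply_getElem l hnd n hn]
  simp only [hl, List.getElem_map, List.getElem_range, List.length_map, List.length_range]
  refine ⟨hf.iterate n hxs, ?_⟩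
  rw [Function.iterate_mod_minimalPeriod_eq, Function.iterate_succ_apply']

namespace Matching

variable {μ ν : Matching M W}

theorem ext_nu (h : ∀ w, μ.nu w = ν.nu w) : μ = ν := by
  have hnu : μ.nu = ν.nu := funext h
  have hmu : μ.mu = ν.mu := funext fun m => Option.ext fun w => by
    rw [μ.consistent, ν.consistent, h]
  cases μ
  cases ν
  simp_all only

/-- The matching in which the partner of `w` in `μ` is matched to `e w`, used to eliminate the
cycles of `e`. -/
def permWomen (μ : Matching M W) (e : Equiv.Perm W) : Matching M W where
  mu m := (μ.mu m).map e
  nu w := μ.nu (e.symm w)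
  consistent m w := by
    rw [← μ.consistent, Option.map_eq_some_iff]
    exact ⟨fun ⟨v, hv, hvw⟩ => by rwa [← hvw, e.symm_apply_apply],
      fun h => ⟨_, h, e.apply_symm_apply w⟩⟩

theorem permWomen_mu (μ : Matching M W) (e : Equiv.Perm W) (m : M) :
    (μ.permWomen e).mu m = (μ.mu m).map e :=
  rfl

theorem permWomen_nu_apply (μ : Matching M W) (e : Equiv.Perm W) (w : W) :
    (μ.permWomen e).nu (e w) = μ.nu w :=
  congrArg μ.nu (e.symm_apply_apply w)

theorem permWomen_nu_of_apply_eq (μ : Matching M W) {e : Equiv.Perm W} {w : W} (h : e w = w) :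
    (μ.permWomen e).nu w = μ.nu w := by
  simpa only [h] using μ.permWomen_nu_apply e w

/-- The elimination of `ρ` from `μ`: the man of each pair of `ρ` is rematched with the woman of the
next pair, cyclically. Meaningful only when the women of `ρ` are distinct and its pairs are matched
in `μ`. -/
def eliminate [DecidableEq W] (μ : Matching M W) (ρ : List (W × M)) : Matching M W :=
  μ.permWomen (ρ.map Prod.fst).formPerm

theorem isElimOf_eliminate [DecidableEq W] {ρ : List (W × M)} (hlen : 2 ≤ ρ.length)
    (hnd : (ρ.map Prod.fst).Nodup) (hρ : ∀ p ∈ ρ, μ.nu p.1 = some p.2) :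
    (μ.eliminate ρ).IsElimOf μ ρ := by
  have hmu : ∀ p ∈ ρ, μ.mu p.2 = some p.1 := fun p hp => (μ.consistent _ _).2 (hρ p hp)
  refine ⟨hlen, hnd, hnd.of_map.map_on fun p hp q hq hpq => ?_, fun i => hρ _ (ρ.get_mem i),
    fun i => ?_, fun m hm => ?_, fun w hw => ?_⟩
  · have hfst : some p.1 = some q.1 := by rw [← hmu p hp, hpq, hmu q hq]
    exact Prod.ext (Option.some.inj hfst) hpq
  · have hnext := List.formPerm_apply_getElem (ρ.map Prod.fst) hnd i (by simp)
    simp only [List.getElem_map, List.length_map] at hnext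
    rw [eliminate, permWomen_mu, hmu _ (ρ.get_mem i)]
    exact congrArg some hnext
  · rw [eliminate, permWomen_mu]
    cases hw : μ.mu m with
    | none => rfl
    | some w =>
      refine congrArg some (List.formPerm_apply_of_notMem fun hmem => hm ?_)
      obtain ⟨p, hp, rfl⟩ := List.mem_map.1 hmem
      have hpm : p.2 = m := Option.some.inj ((hρ p hp).symm.trans ((μ.consistent _ _).1 hw))
      exact List.mem_map.2 ⟨p, hp, hpm⟩
  · exact permWomen_nu_of_apply_eq μ (List.formPerm_apply_of_notMem hw)

end Matching

namespace Market

variable {mkt : Market M W} {μ ν : Matching M W} {m : M} {w : W}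

theorem Dom.wRank_lt (hd : mkt.Dom ν μ) (hw : ν.nu w ≠ μ.nu w) :
    mkt.wRank w (μ.nu w) < mkt.wRank w (ν.nu w) :=
  (hd w).lt_of_ne fun h => hw (mkt.wRank_inj w h).symm

namespace Stable

theorem mRank_lt_of_wRank_lt (hμ : mkt.Stable μ)
    (h : mkt.wRank w (μ.nu w) < mkt.wRank w (some m)) :
    mkt.mRank m (some w) < mkt.mRank m (μ.mu m) := by
  have hne : μ.mu m ≠ some w := fun hmw => by
    rw [(μ.consistent m w).1 hmw] at h
    exact lt_irrefl _ h
  by_contra hle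
  exact hμ.2 m w ⟨hne, (not_lt.1 hle).lt_of_ne fun heq => hne (mkt.mRank_inj m heq), h⟩

theorem wRank_none_le (hμ : mkt.Stable μ) (w : W) :
    mkt.wRank w none ≤ mkt.wRank w (μ.nu w) := by
  cases hw : μ.nu w with
  | none => exact le_rfl
  | some m => exact (hμ.1.2 w m hw).le

theorem nu_eq_none_of_dom (hμ : mkt.Stable μ) (hd : mkt.Dom ν μ) (hw : ν.nu w = none) :
    μ.nu w = none :=
  mkt.wRank_inj w <| le_antisymm (hw ▸ hd w) (hμ.wRank_none_le w)

theorem exists_mu_eq_some_of_dom (hμ : mkt.Stable μ) (hν : mkt.Stable ν) (hd : mkt.Dom ν μ)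
    (hm : ν.mu m = some w) (hw : ν.nu w ≠ μ.nu w) :
    ∃ v, μ.mu m = some v ∧ ν.nu v ≠ μ.nu v := by
  have hwm : ν.nu w = some m := (ν.consistent m w).1 hm
  have hlt : mkt.mRank m (some w) < mkt.mRank m (μ.mu m) :=
    hμ.mRank_lt_of_wRank_lt (hwm ▸ hd.wRank_lt hw)
  have hacc : mkt.mRank m none < mkt.mRank m (some w) := hν.1.1 m w hm
  cases hv : μ.mu m with
  | none => exact absurd (hv ▸ hlt) hacc.asymm
  | some v =>
    refine ⟨v, rfl, fun hvν => ?_⟩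
    have hmv : ν.mu m = some v := (ν.consistent m v).2 (hvν.trans ((μ.consistent m v).1 hv))
    rw [hv, ← hmv, hm] at hlt
    exact lt_irrefl _ hlt

/-- Sending a changed woman to the `μ`-partner of her `ν`-partner is injective on the finite set
of changed women, hence surjective. -/
theorem exists_nu_eq_some_of_dom (hμ : mkt.Stable μ) (hν : mkt.Stable ν) (hd : mkt.Dom ν μ)
    (hfin : {w | ν.nu w ≠ μ.nu w}.Finite) (hw : ν.nu w ≠ μ.nu w) :
    ∃ m v, μ.nu w = some m ∧ ν.mu m = some v ∧ ν.nu v ≠ μ.nu v := by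
  have hstep : ∀ v, ν.nu v ≠ μ.nu v → ∃ u m, ν.mu m = some v ∧ μ.mu m = some u ∧
      ν.nu u ≠ μ.nu u := fun v hv => by
    obtain ⟨m, hm⟩ := Option.ne_none_iff_exists'.1 fun hnone =>
      hv (hnone.trans (hμ.nu_eq_none_of_dom hd hnone).symm)
    have hmv := (ν.consistent m v).2 hm
    obtain ⟨u, hu, hune⟩ := hμ.exists_mu_eq_some_of_dom hν hd hmv hv
    exact ⟨u, m, hmv, hu, hune⟩
  have : Nonempty W := ⟨w⟩
  choose! g hg using hstep
  have hinj : Set.InjOn g {w | ν.nu w ≠ μ.nu w} := fun u hu v hv huv => by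
    obtain ⟨m, hmu, hmg, -⟩ := hg u hu
    obtain ⟨n, hnv, hng, -⟩ := hg v hv
    have hmn : some m = some n := by
      rw [← (μ.consistent _ _).1 hmg, huv, (μ.consistent _ _).1 hng]
    rw [Option.some.inj hmn, hnv] at hmu
    exact (Option.some.inj hmu).symm
  have hmaps : Set.MapsTo g {w | ν.nu w ≠ μ.nu w} {w | ν.nu w ≠ μ.nu w} := fun v hv => by
    obtain ⟨m, -, -, hne⟩ := hg v hv
    exact hne
  obtain ⟨v, hv, rfl⟩ := ((hfin.injOn_iff_bijOn_of_mapsTo hmaps).1 hinj).surjOn hw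
  obtain ⟨m, hmv, hmg, -⟩ := hg v hv
  exact ⟨m, v, (μ.consistent _ _).1 hmg, hmv, hv⟩

end Stable

/-- `s` is the favourite of `m` among the women who prefer him to their partner in `μ`, and `m`
finds her acceptable: the woman to whom a rotation exposed in `μ` moves `m`. She need not be
required to be worse than the partner of `m`, since stability of `μ` makes all these women so. -/
structure IsNextWoman (mkt : Market M W) (μ : Matching M W) (m : M) (s : W) : Prop where
  acceptable : mkt.mRank m none < mkt.mRank m (some s)
  wRank_lt : mkt.wRank s (μ.nu s) < mkt.wRank s (some m)
  mRank_le : ∀ v, mkt.wRank v (μ.nu v) < mkt.wRank v (some m) →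
    mkt.mRank m (some v) ≤ mkt.mRank m (some s)

theorem IsNextWoman.ne {s : W} (hs : mkt.IsNextWoman μ m s) (hm : μ.nu w = some m) : s ≠ w := by
  rintro rfl
  exact hs.wRank_lt.ne (congrArg _ hm)

theorem Stable.exists_isNextWoman (hμ : mkt.Stable μ)
    (hacc : mkt.mRank m none < mkt.mRank m (some w))
    (hw : mkt.wRank w (μ.nu w) < mkt.wRank w (some m)) :
    ∃ s, mkt.IsNextWoman μ m s := by
  have hfin : {v | mkt.wRank v (μ.nu v) < mkt.wRank v (some m)}.Finite :=
    ((Set.finite_Iio (mkt.mRank m (μ.mu m))).preimage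
      ((mkt.mRank_inj m).comp (Option.some_injective W)).injOn).subset
      fun _ hv => hμ.mRank_lt_of_wRank_lt hv
  obtain ⟨s, hs, hmax⟩ := Set.exists_max_image _ (fun v => mkt.mRank m (some v)) hfin ⟨w, hw⟩
  exact ⟨s, hacc.trans_le (hmax w hw), hs, hmax⟩

theorem IsNextWoman.wRank_le_of_dom {s : W} (hs : mkt.IsNextWoman μ m s) (hν : mkt.Stable ν)
    (hd : mkt.Dom ν μ) (hm : ν.mu m = some w) (hw : ν.nu w ≠ μ.nu w) :
    mkt.wRank s (some m) ≤ mkt.wRank s (ν.nu s) := by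
  have hle : mkt.mRank m (some w) ≤ mkt.mRank m (some s) :=
    hs.mRank_le w ((ν.consistent m w).1 hm ▸ hd.wRank_lt hw)
  by_contra hlt
  have hblock := hν.mRank_lt_of_wRank_lt (not_le.1 hlt)
  rw [hm] at hblock
  exact hblock.not_ge hle

theorem Stable.exists_isNextWoman_of_dom (hμ : mkt.Stable μ) (hν : mkt.Stable ν)
    (hd : mkt.Dom ν μ) (hfin : {w | ν.nu w ≠ μ.nu w}.Finite) (hw : ν.nu w ≠ μ.nu w) :
    ∃ m s, μ.nu w = some m ∧ mkt.IsNextWoman μ m s ∧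
      mkt.wRank s (some m) ≤ mkt.wRank s (ν.nu s) := by
  obtain ⟨m, v, hwm, hmv, hv⟩ := hμ.exists_nu_eq_some_of_dom hν hd hfin hw
  obtain ⟨s, hs⟩ := hμ.exists_isNextWoman (hν.1.1 m v hmv)
    ((ν.consistent m v).1 hmv ▸ hd.wRank_lt hv)
  exact ⟨m, s, hwm, hs, hs.wRank_le_of_dom hν hd hmv hv⟩

section PermWomen

variable {e : Equiv.Perm W}

theorem dom_permWomen (he : ∀ w, e w ≠ w → ∃ m, μ.nu w = some m ∧ mkt.IsNextWoman μ m (e w)) :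
    mkt.Dom (μ.permWomen e) μ := by
  refine e.surjective.forall.2 fun w => ?_
  rw [μ.permWomen_nu_apply]
  by_cases hw : e w = w
  · rw [hw]
  · obtain ⟨m, hm, hs⟩ := he w hw
    exact hm ▸ hs.wRank_lt.le

theorem strictDom_permWomen
    (he : ∀ w, e w ≠ w → ∃ m, μ.nu w = some m ∧ mkt.IsNextWoman μ m (e w)) (hne : e ≠ 1) :
    mkt.StrictDom (μ.permWomen e) μ := by
  refine ⟨dom_permWomen he, fun heq => ?_⟩
  obtain ⟨w, hw⟩ := Equiv.Perm.ext_iff.not.1 hne |> not_forall.1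
  obtain ⟨m, hm, hs⟩ := he w hw
  have hnu : μ.nu (e w) = some m := by rw [← hm, ← μ.permWomen_nu_apply e w, heq]
  exact hs.wRank_lt.ne (congrArg _ hnu)

theorem Stable.permWomen (hμ : mkt.Stable μ)
    (he : ∀ w, e w ≠ w → ∃ m, μ.nu w = some m ∧ mkt.IsNextWoman μ m (e w)) :
    mkt.Stable (μ.permWomen e) := by
  have hmoved : ∀ {m w}, μ.mu m = some w → e w = w ∨ mkt.IsNextWoman μ m (e w) :=
    fun {m w} hm => or_iff_not_imp_left.2 fun hw => by
      obtain ⟨n, hn, hs⟩ := he w hw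
      rwa [← Option.some.inj (hn.symm.trans ((μ.consistent m w).1 hm))]
  refine ⟨⟨fun m w hm => ?_, fun w m hw => ?_⟩, fun m w ⟨_, hmw, hwm⟩ => ?_⟩
  · obtain ⟨v, hv, rfl⟩ := Option.map_eq_some_iff.1 hm
    rcases hmoved hv with hfix | hs
    · exact hfix.symm ▸ hμ.1.1 m v hv
    · exact hs.acceptable
  · have hle := (hμ.wRank_none_le w).trans (dom_permWomen he w)
    rw [hw] at hle
    exact hle.lt_of_ne fun h => Option.some_ne_none m (mkt.wRank_inj w h).symm
  · have hpref := (dom_permWomen he w).trans_lt hwm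
    have hlt := hμ.mRank_lt_of_wRank_lt hpref
    rw [μ.permWomen_mu] at hmw
    cases hv : μ.mu m with
    | none => exact hlt.asymm (by simpa [hv] using hmw)
    | some v =>
      rw [hv] at hlt hmw
      rcases hmoved hv with hfix | hs
      · exact hlt.asymm (by simpa [hfix] using hmw)
      · exact (hs.mRank_le w hpref).not_gt hmw

end PermWomen

theorem Stable.exists_isNextWoman_cycle [DecidableEq W] (hμ : mkt.Stable μ) (hν : mkt.Stable ν)
    (hd : mkt.Dom ν μ) (hfin : {w | ν.nu w ≠ μ.nu w}.Finite) (hw : ν.nu w ≠ μ.nu w) :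
    ∃ ρ : List (W × M), ρ ≠ [] ∧ (ρ.map Prod.fst).Nodup ∧ ∀ p ∈ ρ, μ.nu p.1 = some p.2 ∧
      ∃ s, (ρ.map Prod.fst).formPerm p.1 = s ∧ mkt.IsNextWoman μ p.2 s ∧
        mkt.wRank s (some p.2) ≤ mkt.wRank s (ν.nu s) := by
  obtain ⟨m, -⟩ := hμ.exists_nu_eq_some_of_dom hν hd hfin hw
  have : Nonempty W := ⟨w⟩
  have : Nonempty M := ⟨m⟩
  choose! man next hman hnext hle using
    fun w => hμ.exists_isNextWoman_of_dom hν hd hfin (w := w)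
  have hmaps : Set.MapsTo next {w | ν.nu w ≠ μ.nu w} {w | ν.nu w ≠ μ.nu w} := fun v hv heq =>
    ((hnext v hv).wRank_lt.trans_le (hle v hv)).ne' (congrArg _ heq)
  obtain ⟨l, hl, hnd, hcycle⟩ := exists_nodup_formPerm_eq_of_mapsTo hfin ⟨w, hw⟩ hmaps
  have hfst : (l.map fun v => (v, man v)).map Prod.fst = l :=
    List.map_map.trans (List.map_id l)
  refine ⟨l.map fun v => (v, man v), List.map_eq_nil_iff.not.2 hl, by rwa [hfst], ?_⟩
  rw [hfst]
  refine List.forall_mem_map.2 fun v hv => ?_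
  obtain ⟨hchanged, hperm⟩ := hcycle v hv
  exact ⟨hman v hchanged, next v, hperm, hnext v hchanged, hle v hchanged⟩

theorem Stable.exists_eliminate_between [DecidableEq W] (hμ : mkt.Stable μ) (hν : mkt.Stable ν)
    (hd : mkt.StrictDom ν μ) (hfin : {w | ν.nu w ≠ μ.nu w}.Finite) :
    ∃ ρ : List (W × M), (μ.eliminate ρ).IsElimOf μ ρ ∧ mkt.Stable (μ.eliminate ρ) ∧
      mkt.StrictDom (μ.eliminate ρ) μ ∧ mkt.Dom ν (μ.eliminate ρ) := by
  obtain ⟨w, hw⟩ : ∃ w, ν.nu w ≠ μ.nu w :=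
    not_forall.1 fun hall => hd.2 (Matching.ext_nu hall)
  obtain ⟨ρ, hρ, hnd, hcycle⟩ := hμ.exists_isNextWoman_cycle hν hd.1 hfin hw
  set e := (ρ.map Prod.fst).formPerm
  have hmoved : ∀ v, e v ≠ v → ∃ m, μ.nu v = some m ∧ mkt.IsNextWoman μ m (e v) ∧
      mkt.wRank (e v) (some m) ≤ mkt.wRank (e v) (ν.nu (e v)) := fun v hv => by
    obtain ⟨p, hp, rfl⟩ := List.mem_map.1 (List.mem_of_formPerm_apply_ne hv)
    obtain ⟨hm, s, rfl, hs⟩ := hcycle p hp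
    exact ⟨p.2, hm, hs⟩
  have hnext : ∀ v, e v ≠ v → ∃ m, μ.nu v = some m ∧ mkt.IsNextWoman μ m (e v) := fun v hv =>
    (hmoved v hv).imp fun _ h => ⟨h.1, h.2.1⟩
  obtain ⟨p, hp⟩ := List.exists_mem_of_ne_nil ρ hρ
  have hne : e p.1 ≠ p.1 := by
    obtain ⟨hm, s, rfl, hs, -⟩ := hcycle p hp
    exact hs.ne hm
  have hlen : 2 ≤ ρ.length := by
    simpa only [List.length_map] using
      (List.formPerm_apply_mem_ne_self_iff _ hnd _ (List.mem_map_of_mem hp)).1 hne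
  have he : e ≠ 1 := fun hone => hne (congrArg (· p.1) hone)
  refine ⟨ρ, Matching.isElimOf_eliminate hlen hnd fun p hp => (hcycle p hp).1,
    hμ.permWomen hnext, strictDom_permWomen hnext he, e.surjective.forall.2 fun v => ?_⟩
  rw [Matching.eliminate, μ.permWomen_nu_apply]
  by_cases hv : e v = v
  · exact hv.symm ▸ hd.1 v
  · obtain ⟨m, hm, -, hle⟩ := hmoved v hv
    exact hm ▸ hle

theorem Covers.exists_exposedRotation_mem (hc : mkt.Covers ν μ) (hμ : mkt.Stable μ)
    (hν : mkt.Stable ν) (hfin : {w | ν.nu w ≠ μ.nu w}.Finite) (hm : μ.mu m = some w)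
    (hmν : ν.mu m ≠ some w) :
    ∃ ρ, mkt.ExposedRotation μ ρ ∧ (w, m) ∈ ρ := by
  classical
  obtain ⟨ρ, helim, hσ, hσμ, hνσ⟩ := hμ.exists_eliminate_between hν hc.1 hfin
  have heq : ν = μ.eliminate ρ := by
    by_contra hne
    exact hc.2 ⟨_, hσ, ⟨hνσ, hne⟩, hσμ⟩
  rw [← heq] at helim
  have hrot : mkt.ExposedRotation μ ρ := ⟨ν, helim, hν, hc⟩
  obtain ⟨-, -, -, hpairs, -, hfixed, -⟩ := helim
  have hmem : m ∈ ρ.map Prod.snd := by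
    by_contra hnot
    exact hmν ((hfixed m hnot).trans hm)
  obtain ⟨⟨v, _⟩, hp, rfl⟩ := List.mem_map.1 hmem
  obtain ⟨i, hi⟩ := List.get_of_mem hp
  have hv : μ.nu v = some _ := hi ▸ hpairs i
  rw [(μ.consistent _ _).2 hv] at hm
  exact ⟨ρ, hrot, Option.some.inj hm ▸ hp⟩

theorem InPi.exists_stable_mu_eq_some {ρ : List (W × M)} (hρ : mkt.InPi ρ) (hmem : (w, m) ∈ ρ) :
    ∃ μ, mkt.Stable μ ∧ μ.mu m = some w := by
  obtain ⟨μ, hμ, ν, helim, -, -⟩ := hρ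
  obtain ⟨i, hi⟩ := List.get_of_mem hmem
  have hnu := helim.2.2.2.1 i
  rw [hi] at hnu
  exact ⟨μ, hμ, (μ.consistent m w).2 hnu⟩

/-- The stable matchings of a market, ordered by woman-dominance: `μ ≤ ν` when every woman weakly
prefers her partner in `ν`. -/
def StableMatching (mkt : Market M W) : Type _ :=
  {μ : Matching M W // mkt.Stable μ}

namespace StableMatching

instance : PartialOrder mkt.StableMatching :=
  PartialOrder.lift (fun μ w => mkt.wRank w (μ.1.nu w)) fun _ _ h =>
    Subtype.ext (Matching.ext_nu fun w => mkt.wRank_inj w (congrFun h w))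

theorem lt_iff_strictDom {μ ν : mkt.StableMatching} : μ < ν ↔ mkt.StrictDom ν.1 μ.1 :=
  lt_iff_le_and_ne.trans <| and_congr Iff.rfl <| ne_comm.trans Subtype.ext_iff.not

theorem covers_of_covBy {μ ν : mkt.StableMatching} (h : μ ⋖ ν) : mkt.Covers ν.1 μ.1 :=
  ⟨lt_iff_strictDom.1 h.lt, fun ⟨κ, hκ, hκν, hμκ⟩ =>
    h.2 (c := ⟨κ, hκ⟩) (lt_iff_strictDom.2 hμκ) (lt_iff_strictDom.2 hκν)⟩

theorem finite_of_forall_dom {μtop : Matching M W}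
    (hopt : ∀ μ, mkt.Stable μ → mkt.Dom μtop μ) (hfin : {w | μtop.nu w ≠ none}.Finite) :
    Finite mkt.StableMatching := by
  classical
  have := hfin.fintype
  let ranks (μ : Matching M W) : {w | μtop.nu w ≠ none} → ℕ := fun w => mkt.wRank w (μ.nu w)
  refine Finite.of_injective (β := Set.Iic (ranks μtop))
    (fun μ => ⟨ranks μ.1, fun w => hopt μ.1 μ.2 w⟩) fun μ ν h => ?_
  refine Subtype.ext (Matching.ext_nu fun w => ?_)
  by_cases hw : μtop.nu w = none
  · rw [μ.2.nu_eq_none_of_dom (hopt μ.1 μ.2) hw, ν.2.nu_eq_none_of_dom (hopt ν.1 ν.2) hw]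
  · exact mkt.wRank_inj w (congrFun (congrArg Subtype.val h) ⟨w, hw⟩)

end StableMatching

theorem exists_covers_of_mu_ne {μtop : Matching M W} (htop : mkt.Stable μtop)
    (hopt : ∀ μ, mkt.Stable μ → mkt.Dom μtop μ) (hfin : {w | μtop.nu w ≠ none}.Finite)
    (hμ : mkt.Stable μ) (hm : μ.mu m = some w) (hne : μtop.mu m ≠ some w) :
    ∃ κ ν, mkt.Stable κ ∧ mkt.Stable ν ∧ mkt.Covers ν κ ∧ κ.mu m = some w ∧ ν.mu m ≠ some w := by
  have := StableMatching.finite_of_forall_dom hopt hfin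
  obtain ⟨κ, hκ⟩ := (Set.toFinite {κ : mkt.StableMatching | κ.1.mu m = some w}).exists_maximal
    ⟨⟨μ, hμ⟩, hm⟩
  have hnotmax : ¬ IsMax κ := fun hmax => by
    have hκtop : κ.1 = μtop :=
      congrArg Subtype.val (hmax.eq_of_le (b := ⟨μtop, htop⟩) (hopt κ.1 κ.2))
    exact hne (hκtop ▸ hκ.prop)
  obtain ⟨ν, hcov⟩ := exists_covBy_of_wellFoundedLT hnotmax
  exact ⟨κ.1, ν.1, κ.2, ν.2, StableMatching.covers_of_covBy hcov, hκ.prop,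
    fun hmν => hcov.lt.not_ge (hκ.le_of_ge hmν hcov.le)⟩

end Market

theorem stable_partners_iff_rotation_or_top_general {mkt : Market M W} {μtop : Matching M W}
    (htop : mkt.Stable μtop) (hopt : ∀ μ : Matching M W, mkt.Stable μ → mkt.Dom μtop μ)
    (hfin : {w | μtop.nu w ≠ none}.Finite) (m : M) (w : W) :
    (∃ μ : Matching M W, mkt.Stable μ ∧ μ.mu m = some w) ↔
      ((∃ ρ : List (W × M), mkt.InPi ρ ∧ (w, m) ∈ ρ) ∨ μtop.mu m = some w) := by
  constructor
  · rintro ⟨μ, hμ, hm⟩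
    refine or_iff_not_imp_right.2 fun hne => ?_
    obtain ⟨κ, ν, hκ, hν, hcov, hmκ, hmν⟩ := Market.exists_covers_of_mu_ne htop hopt hfin hμ hm hne
    have hchanged : {w | ν.nu w ≠ κ.nu w}.Finite := hfin.subset fun v hv hnone => hv <| by
      rw [hν.nu_eq_none_of_dom (hopt ν hν) hnone, hκ.nu_eq_none_of_dom (hopt κ hκ) hnone]
    obtain ⟨ρ, hρ, hmem⟩ := hcov.exists_exposedRotation_mem hκ hν hchanged hmκ hmν
    exact ⟨ρ, ⟨κ, hκ, hρ⟩, hmem⟩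
  · rintro (⟨ρ, hρ, hmem⟩ | hm)
    · exact hρ.exists_stable_mu_eq_some hmem
    · exact ⟨μtop, htop, hm⟩

/-- `m` and `w` are stable partners iff the pair `(w, m)` appears
in some rotation in `Π`, or `m` and `w` are matched in the woman-optimal
stable matching. -/
theorem stable_partners_iff_rotation_or_top {M W : Type*} [Fintype M] [Fintype W]
    (mkt : Market M W) (μtop : Matching M W) (htop : mkt.Stable μtop)
    (hopt : ∀ μ : Matching M W, mkt.Stable μ → mkt.Dom μtop μ)
    (m : M) (w : W) :
    (∃ μ : Matching M W, mkt.Stable μ ∧ μ.mu m = some w) ↔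
      ((∃ ρ : List (W × M), mkt.InPi ρ ∧ (w, m) ∈ ρ) ∨ μtop.mu m = some w) :=
  stable_partners_iff_rotation_or_top_general htop hopt (Set.toFinite _) m w
end

section
/- Rotations move agents to their next stable partners: if ρ = [(w_0,m_0),…,(w_{k-1},m_{k-1})] is a rotation exposed in some stable matching, then for each i (indices mod k), m_{i-1} is the ≻_{w_i}-least stable partner of w_i among those stable partners strictly preferred by w_i to m_i, and w_{i+1} is the ≻_{m_i}-greatest stable partner of m_i among those stable partners strictly less preferred by m_i than w_i. -/
variable {M W : Type*}

/-!
The women who strictly prefer `μ` to `μ'` and the men who strictly prefer `μ'` to `μ` are injected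
into each other by the two matchings, so when one side is finite both injections are bijections.
Hence a couple of `μ` separated in `μ'` never agree on which of the two they prefer, and letting
every woman choose her better partner and every man his worse partner gives a stable matching, the
join.

Suppose `μ₁` covers `μ₀` and some stable `μ` gives the woman `w` a partner strictly between her
partners in `μ₀` and `μ₁`. Then `(μ ∨ μ₀) ∧ μ₁` is a stable matching strictly between `μ₀` and `μ₁`,
since it gives `w` the same partner as `μ`. The claim about men is the dual one.
-/

namespace Matching

/-- The same matching with the roles of men and women exchanged; with `Market.swap` it transfers
results from one side of the market to the other. Applying it twice is definitionally the
identity. -/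
def swap (μ : Matching M W) : Matching W M where
  mu := μ.nu
  nu := μ.mu
  consistent w m := (μ.consistent m w).symm

theorem eq_of_mu_eq_some (μ : Matching M W) {m m' : M} {w : W}
    (hm : μ.mu m = some w) (hm' : μ.mu m' = some w) : m = m' :=
  Option.some.inj <| ((μ.consistent m w).1 hm).symm.trans ((μ.consistent m' w).1 hm')

theorem exists_mem_mu_eq_some {μ μ' : Matching M W} {A : Set M} {B : Set W}
    (hfin : A.Finite ∨ B.Finite) (hA : ∀ m ∈ A, ∃ w ∈ B, μ'.mu m = some w)
    (hB : ∀ w ∈ B, ∃ m ∈ A, μ.mu m = some w) {m : M} (hm : m ∈ A) :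
    ∃ w ∈ B, μ.mu m = some w := by
  choose f hfB hf using fun a : A => hA a a.2
  choose g hgA hg using fun b : B => hB b b.2
  let F : A → B := fun a => ⟨f a, hfB a⟩
  let G : B → A := fun b => ⟨g b, hgA b⟩
  have F_injective : Function.Injective F := fun a a' h =>
    Subtype.ext <| μ'.eq_of_mu_eq_some (hf a) ((hf a').trans (congrArg (some ·.1) h.symm))
  have G_injective : Function.Injective G := fun b b' h =>
    Subtype.ext <| Option.some.inj <|
      (hg b).symm.trans ((congrArg (μ.mu ·.1) h).trans (hg b'))
  have : Finite A := hfin.elim (fun hA => hA) fun hB =>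
    have : Finite B := hB
    Finite.of_injective F F_injective
  obtain ⟨a, ha⟩ := Finite.surjective_of_injective (G_injective.comp F_injective) ⟨m, hm⟩
  have hga : g (F a) = m := congrArg Subtype.val ha
  exact ⟨F a, (F a).2, hga ▸ hg (F a)⟩

end Matching

namespace Market

/-- The same market with the roles of men and women exchanged. -/
def swap (mkt : Market M W) : Market W M where
  mRank := mkt.wRank
  wRank := mkt.mRank
  mRank_inj := mkt.wRank_inj
  wRank_inj := mkt.mRank_inj

variable {mkt : Market M W} {μ μ' σ : Matching M W} {m : M} {w : W}

theorem Stable.swap (h : mkt.Stable μ) : mkt.swap.Stable μ.swap :=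
  ⟨⟨h.1.2, h.1.1⟩, fun w m ⟨hne, hw, hm⟩ =>
    h.2 m w ⟨fun e => hne ((μ.consistent m w).1 e), hm, hw⟩⟩

theorem indivRational_iff_rank_none_le :
    mkt.IndivRational μ ↔ (∀ m, mkt.mRank m none ≤ mkt.mRank m (μ.mu m)) ∧
      ∀ w, mkt.wRank w none ≤ mkt.wRank w (μ.nu w) := by
  refine and_congr (forall_congr' fun m => ?_) (forall_congr' fun w => ?_)
  · cases μ.mu m <;> simp [(mkt.mRank_inj m).ne, le_iff_lt_or_eq]
  · cases μ.nu w <;> simp [(mkt.wRank_inj w).ne, le_iff_lt_or_eq]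

theorem Stable.wRank_le_of_mRank_lt (h : mkt.Stable μ)
    (hm : mkt.mRank m (μ.mu m) < mkt.mRank m (some w)) :
    mkt.wRank w (some m) ≤ mkt.wRank w (μ.nu w) :=
  not_lt.1 fun hw => h.2 m w ⟨fun e => hm.ne (congrArg (mkt.mRank m) e), hm, hw⟩

theorem mRank_eq_iff_wRank_eq (hmw : μ.mu m = some w) :
    mkt.mRank m (μ.mu m) = mkt.mRank m (μ'.mu m) ↔
      mkt.wRank w (μ'.nu w) = mkt.wRank w (μ.nu w) := by
  rw [(mkt.mRank_inj m).eq_iff, (mkt.wRank_inj w).eq_iff, hmw, (μ.consistent m w).1 hmw,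
    eq_comm, μ'.consistent]

theorem Stable.mRank_lt_of_wRank_lt_s13 (h' : mkt.Stable μ') (hmw : μ.mu m = some w)
    (hw : mkt.wRank w (μ'.nu w) < mkt.wRank w (μ.nu w)) :
    mkt.mRank m (μ.mu m) < mkt.mRank m (μ'.mu m) := by
  have hwm : μ.nu w = some m := (μ.consistent m w).1 hmw
  have hle : mkt.mRank m (μ.mu m) ≤ mkt.mRank m (μ'.mu m) :=
    hmw ▸ h'.swap.wRank_le_of_mRank_lt (hwm ▸ hw)
  exact hle.lt_of_ne fun e => hw.ne ((mRank_eq_iff_wRank_eq hmw).1 e)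

theorem Stable.exists_nu_eq_some_of_wRank_lt (h' : mkt.Stable μ')
    (hw : mkt.wRank w (μ'.nu w) < mkt.wRank w (μ.nu w)) : ∃ m, μ.nu w = some m :=
  Option.ne_none_iff_exists'.1 fun e =>
    ((indivRational_iff_rank_none_le.1 h'.1).2 w).not_gt (e ▸ hw)

theorem Stable.exists_mRank_lt_of_wRank_lt (h' : mkt.Stable μ')
    (hw : mkt.wRank w (μ'.nu w) < mkt.wRank w (μ.nu w)) :
    ∃ m, mkt.mRank m (μ.mu m) < mkt.mRank m (μ'.mu m) ∧ μ.mu m = some w := by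
  obtain ⟨m, hwm⟩ := h'.exists_nu_eq_some_of_wRank_lt hw
  have hmw := (μ.consistent m w).2 hwm
  exact ⟨m, h'.mRank_lt_of_wRank_lt_s13 hmw hw, hmw⟩

theorem Stable.exists_wRank_lt_of_mRank_lt (h : mkt.Stable μ)
    (hm : mkt.mRank m (μ.mu m) < mkt.mRank m (μ'.mu m)) :
    ∃ w, mkt.wRank w (μ'.nu w) < mkt.wRank w (μ.nu w) ∧ μ'.mu m = some w := by
  obtain ⟨w, hw, hwm⟩ := h.swap.exists_mRank_lt_of_wRank_lt (μ := μ'.swap) hm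
  exact ⟨w, hw, (μ'.consistent m w).2 hwm⟩

theorem Stable.exists_mu_eq_some_wRank_lt (hfin : Finite M ∨ Finite W) (h : mkt.Stable μ)
    (h' : mkt.Stable μ') (hm : mkt.mRank m (μ.mu m) < mkt.mRank m (μ'.mu m)) :
    ∃ w, mkt.wRank w (μ'.nu w) < mkt.wRank w (μ.nu w) ∧ μ.mu m = some w :=
  Matching.exists_mem_mu_eq_some (μ' := μ')
    (A := {m | mkt.mRank m (μ.mu m) < mkt.mRank m (μ'.mu m)})
    (B := {w | mkt.wRank w (μ'.nu w) < mkt.wRank w (μ.nu w)})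
    (hfin.imp (fun (_ : Finite M) => Set.toFinite _) fun (_ : Finite W) => Set.toFinite _)
    (fun _ => h.exists_wRank_lt_of_mRank_lt) (fun _ => h'.exists_mRank_lt_of_wRank_lt) hm

theorem Stable.mRank_lt_iff_wRank_lt (hfin : Finite M ∨ Finite W) (h : mkt.Stable μ)
    (h' : mkt.Stable μ') (hmw : μ.mu m = some w) :
    mkt.mRank m (μ.mu m) < mkt.mRank m (μ'.mu m) ↔
      mkt.wRank w (μ'.nu w) < mkt.wRank w (μ.nu w) := by
  refine ⟨fun hm => ?_, h'.mRank_lt_of_wRank_lt_s13 hmw⟩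
  obtain ⟨w', hw', hmw'⟩ := h.exists_mu_eq_some_wRank_lt hfin h' hm
  obtain rfl : w = w' := Option.some.inj (hmw.symm.trans hmw')
  exact hw'

theorem Stable.mRank_le_iff_wRank_le (hfin : Finite M ∨ Finite W) (h : mkt.Stable μ)
    (h' : mkt.Stable μ') (hmw : μ.mu m = some w) :
    mkt.mRank m (μ.mu m) ≤ mkt.mRank m (μ'.mu m) ↔
      mkt.wRank w (μ'.nu w) ≤ mkt.wRank w (μ.nu w) := by
  rw [le_iff_lt_or_eq, le_iff_lt_or_eq, h.mRank_lt_iff_wRank_lt hfin h' hmw,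
    mRank_eq_iff_wRank_eq hmw]

theorem IsJoin.wRank_nu (hσ : mkt.IsJoin μ μ' σ) (w : W) :
    mkt.wRank w (σ.nu w) = max (mkt.wRank w (μ.nu w)) (mkt.wRank w (μ'.nu w)) := by
  rw [hσ w, apply_ite (mkt.wRank w), max_comm, max_def]

theorem IsMeet.wRank_nu (hσ : mkt.IsMeet μ μ' σ) (w : W) :
    mkt.wRank w (σ.nu w) = min (mkt.wRank w (μ.nu w)) (mkt.wRank w (μ'.nu w)) := by
  rw [hσ w, apply_ite (mkt.wRank w), min_def]

theorem exists_isJoin_isMeet_swap (hfin : Finite M ∨ Finite W) (h : mkt.Stable μ)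
    (h' : mkt.Stable μ') :
    ∃ σ : Matching M W, mkt.IsJoin μ μ' σ ∧ mkt.swap.IsMeet μ.swap μ'.swap σ.swap := by
  refine ⟨{
    mu := fun m => if mkt.mRank m (μ.mu m) ≤ mkt.mRank m (μ'.mu m) then μ.mu m else μ'.mu m
    nu := fun w => if mkt.wRank w (μ'.nu w) ≤ mkt.wRank w (μ.nu w) then μ.nu w else μ'.nu w
    consistent := fun m w => ?_ }, fun _ => rfl, fun _ => rfl⟩
  have opposed : μ.mu m = some w → (mkt.mRank m (μ.mu m) ≤ mkt.mRank m (μ'.mu m) ↔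
      mkt.wRank w (μ'.nu w) ≤ mkt.wRank w (μ.nu w)) := h.mRank_le_iff_wRank_le hfin h'
  have opposed' : μ'.mu m = some w → (mkt.mRank m (μ.mu m) ≤ mkt.mRank m (μ'.mu m) ↔
      mkt.wRank w (μ'.nu w) ≤ mkt.wRank w (μ.nu w)) := fun hmw => by
    rw [← not_lt, ← not_lt, h'.mRank_lt_iff_wRank_lt hfin h hmw]
  have := μ.consistent m w
  have := μ'.consistent m w
  split_ifs <;> tauto

theorem Stable.of_isJoin_isMeet_swap (h : mkt.Stable μ) (h' : mkt.Stable μ')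
    (hw : mkt.IsJoin μ μ' σ) (hm : mkt.swap.IsMeet μ.swap μ'.swap σ.swap) : mkt.Stable σ := by
  have men_min : ∀ m, mkt.mRank m (σ.mu m) = min (mkt.mRank m (μ.mu m)) (mkt.mRank m (μ'.mu m)) :=
    hm.wRank_nu
  obtain ⟨men, women⟩ := indivRational_iff_rank_none_le.1 h.1
  obtain ⟨men', -⟩ := indivRational_iff_rank_none_le.1 h'.1
  refine ⟨indivRational_iff_rank_none_le.2 ⟨fun m => ?_, fun w => ?_⟩, ?_⟩
  · exact (le_min (men m) (men' m)).trans_eq (men_min m).symm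
  · exact (le_max_of_le_left (women w)).trans_eq (hw.wRank_nu w).symm
  · rintro m w ⟨-, m_prefers, w_prefers⟩
    rw [hw.wRank_nu, max_lt_iff] at w_prefers
    rw [men_min, min_lt_iff] at m_prefers
    rcases m_prefers with hlt | hlt
    · exact w_prefers.1.not_ge (h.wRank_le_of_mRank_lt hlt)
    · exact w_prefers.2.not_ge (h'.wRank_le_of_mRank_lt hlt)

theorem Stable.exists_isJoin (hfin : Finite M ∨ Finite W) (h : mkt.Stable μ)
    (h' : mkt.Stable μ') : ∃ σ : Matching M W, mkt.Stable σ ∧ mkt.IsJoin μ μ' σ := by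
  obtain ⟨σ, hw, hm⟩ := exists_isJoin_isMeet_swap hfin h h'
  exact ⟨σ, h.of_isJoin_isMeet_swap h' hw hm, hw⟩

theorem Stable.exists_isMeet (hfin : Finite M ∨ Finite W) (h : mkt.Stable μ)
    (h' : mkt.Stable μ') : ∃ σ : Matching M W, mkt.Stable σ ∧ mkt.IsMeet μ μ' σ := by
  obtain ⟨σ, hm, hw⟩ := exists_isJoin_isMeet_swap hfin.symm h.swap h'.swap
  exact ⟨σ.swap, (h.swap.of_isJoin_isMeet_swap h'.swap hm hw).swap, hw⟩

theorem Dom.swap (h : mkt.Stable μ) (hd : mkt.Dom μ' μ) :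
    mkt.swap.Dom μ.swap μ'.swap := fun m => by
  by_contra! hlt
  obtain ⟨w, hw, -⟩ := h.exists_wRank_lt_of_mRank_lt hlt
  exact (hd w).not_gt hw

theorem StrictDom.swap (h : mkt.Stable μ) (hd : mkt.StrictDom μ' μ) :
    mkt.swap.StrictDom μ.swap μ'.swap :=
  ⟨hd.1.swap h, fun e => hd.2 (congrArg Matching.swap e).symm⟩

theorem Covers.swap (h : mkt.Stable μ) (h' : mkt.Stable μ') (hc : mkt.Covers μ' μ) :
    mkt.swap.Covers μ.swap μ'.swap :=
  ⟨hc.1.swap h, fun ⟨σ, hσ, σ_below_μ, μ'_below_σ⟩ =>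
    hc.2 ⟨σ.swap, hσ.swap, μ'_below_σ.swap h'.swap, σ_below_μ.swap hσ⟩⟩

theorem Dom.wRank_lt_of_nu_ne (hd : mkt.Dom μ' μ) (hne : μ.nu w ≠ μ'.nu w) :
    mkt.wRank w (μ.nu w) < mkt.wRank w (μ'.nu w) :=
  (hd w).lt_of_ne ((mkt.wRank_inj w).ne hne)

theorem Covers.wRank_notMem_Ioo (hfin : Finite M ∨ Finite W) {μ₀ μ₁ : Matching M W}
    (h₀ : mkt.Stable μ₀) (h₁ : mkt.Stable μ₁) (hc : mkt.Covers μ₁ μ₀) (h : mkt.Stable μ) (w : W) :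
    mkt.wRank w (μ.nu w) ∉ Set.Ioo (mkt.wRank w (μ₀.nu w)) (mkt.wRank w (μ₁.nu w)) := by
  rintro ⟨hlt₀, hlt₁⟩
  obtain ⟨τ, hτ, τ_join⟩ := h.exists_isJoin hfin h₀
  obtain ⟨σ, hσ, σ_meet⟩ := hτ.exists_isMeet hfin h₁
  have rank_σ (v : W) : mkt.wRank v (σ.nu v) =
      min (max (mkt.wRank v (μ.nu v)) (mkt.wRank v (μ₀.nu v))) (mkt.wRank v (μ₁.nu v)) := by
    rw [σ_meet.wRank_nu, τ_join.wRank_nu]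
  have rank_σ_w : mkt.wRank w (σ.nu w) = mkt.wRank w (μ.nu w) := by
    rw [rank_σ, max_eq_left hlt₀.le, min_eq_left hlt₁.le]
  refine hc.2 ⟨σ, hσ, ⟨fun v => ?_, ?_⟩, ⟨fun v => ?_, ?_⟩⟩
  · exact (rank_σ v).trans_le (min_le_right _ _)
  · rintro rfl
    exact hlt₁.ne' rank_σ_w
  · exact (le_min (le_max_right _ _) (hc.1.1 v)).trans_eq (rank_σ v).symm
  · rintro rfl
    exact hlt₀.ne rank_σ_w

end Market

theorem rotNext_rotPrev (ρ : List (W × M)) (i : Fin ρ.length) : RotNext ρ (RotPrev ρ i) = i := by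
  have hi := i.isLt
  apply Fin.ext
  simp only [RotNext, RotPrev, Nat.mod_add_mod]
  rw [Nat.sub_add_cancel (by omega), Nat.add_mod_right, Nat.mod_eq_of_lt hi]

theorem rotNext_ne_self {ρ : List (W × M)} (hρ : 2 ≤ ρ.length) (i : Fin ρ.length) :
    RotNext ρ i ≠ i := fun e => by
  have hval : (i.1 + 1) % ρ.length = i.1 := congrArg Fin.val e
  have hi := i.isLt
  rcases Nat.lt_or_ge (i.1 + 1) ρ.length with hlt | hge
  · rw [Nat.mod_eq_of_lt hlt] at hval
    omega
  · rw [show i.1 + 1 = ρ.length by omega, Nat.mod_self] at hval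
    omega

namespace Matching.IsElimOf

variable {μ μ' : Matching M W} {ρ : List (W × M)}

theorem nu_get (h : μ'.IsElimOf μ ρ) (i : Fin ρ.length) :
    μ.nu (ρ.get i).1 = some (ρ.get i).2 :=
  h.2.2.2.1 i

theorem mu_get_next (h : μ'.IsElimOf μ ρ) (i : Fin ρ.length) :
    μ'.mu (ρ.get i).2 = some (ρ.get (RotNext ρ i)).1 :=
  h.2.2.2.2.1 i

theorem nu_get_prev (h : μ'.IsElimOf μ ρ) (i : Fin ρ.length) :
    μ'.nu (ρ.get i).1 = some (ρ.get (RotPrev ρ i)).2 := by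
  rw [← μ'.consistent, h.mu_get_next, rotNext_rotPrev]

theorem mu_get_ne (h : μ'.IsElimOf μ ρ) (i : Fin ρ.length) :
    μ'.mu (ρ.get i).2 ≠ some (ρ.get i).1 := by
  have ⟨two_le, nodup_women, _⟩ := h
  rw [h.mu_get_next]
  intro e
  have get_eq : ρ.get (RotNext ρ i) = ρ.get i := List.inj_on_of_nodup_map nodup_women
    (ρ.get_mem _) (ρ.get_mem _) (Option.some.inj e)
  exact rotNext_ne_self two_le i (nodup_women.of_map.injective_get get_eq)

end Matching.IsElimOf

theorem rotation_moves_to_next_stable_partner_general (hfin : Finite M ∨ Finite W)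
    (mkt : Market M W) (μ0 : Matching M W) (h0 : mkt.Stable μ0)
    (ρ : List (W × M)) (hρ : mkt.ExposedRotation μ0 ρ) (i : Fin ρ.length) :
    ((∃ μ : Matching M W, mkt.Stable μ ∧
        μ.nu (ρ.get i).1 = some (ρ.get (RotPrev ρ i)).2) ∧
      mkt.wRank (ρ.get i).1 (some (ρ.get i).2) <
        mkt.wRank (ρ.get i).1 (some (ρ.get (RotPrev ρ i)).2) ∧
      (∀ m' : M, (∃ μ : Matching M W, mkt.Stable μ ∧ μ.nu (ρ.get i).1 = some m') →
        mkt.wRank (ρ.get i).1 (some (ρ.get i).2) < mkt.wRank (ρ.get i).1 (some m') →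
        mkt.wRank (ρ.get i).1 (some (ρ.get (RotPrev ρ i)).2) ≤
          mkt.wRank (ρ.get i).1 (some m'))) ∧
    ((∃ μ : Matching M W, mkt.Stable μ ∧
        μ.mu (ρ.get i).2 = some (ρ.get (RotNext ρ i)).1) ∧
      mkt.mRank (ρ.get i).2 (some (ρ.get (RotNext ρ i)).1) <
        mkt.mRank (ρ.get i).2 (some (ρ.get i).1) ∧
      (∀ w' : W, (∃ μ : Matching M W, mkt.Stable μ ∧ μ.mu (ρ.get i).2 = some w') →
        mkt.mRank (ρ.get i).2 (some w') < mkt.mRank (ρ.get i).2 (some (ρ.get i).1) →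
        mkt.mRank (ρ.get i).2 (some w') ≤
          mkt.mRank (ρ.get i).2 (some (ρ.get (RotNext ρ i)).1))) := by
  obtain ⟨μ1, helim, h1, hc⟩ := hρ
  have nu0 := helim.nu_get i
  have nu1 := helim.nu_get_prev i
  have mu0 := (μ0.consistent _ _).2 nu0
  have mu1 := helim.mu_get_next i
  have mu_ne : μ1.mu (ρ.get i).2 ≠ μ0.mu (ρ.get i).2 := mu0 ▸ helim.mu_get_ne i
  have nu_ne : μ0.nu (ρ.get i).1 ≠ μ1.nu (ρ.get i).1 := fun e =>
    helim.mu_get_ne i ((μ1.consistent _ _).2 (e.symm.trans nu0))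
  have hc' := hc.swap h0 h1
  have woman_gains := hc.1.1.wRank_lt_of_nu_ne nu_ne
  have man_loses : mkt.mRank _ (μ1.mu _) < mkt.mRank _ (μ0.mu _) := hc'.1.1.wRank_lt_of_nu_ne mu_ne
  rw [nu0, nu1] at woman_gains
  rw [mu0, mu1] at man_loses
  refine ⟨⟨⟨μ1, h1, nu1⟩, woman_gains, ?_⟩, ⟨⟨μ1, h1, mu1⟩, man_loses, ?_⟩⟩
  · rintro m' ⟨μ, hμ, hm'⟩ hlt
    rw [← nu0, ← hm'] at hlt
    rw [← nu1, ← hm']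
    exact not_lt.1 fun hlt' => hc.wRank_notMem_Ioo hfin h0 h1 hμ _ ⟨hlt, hlt'⟩
  · rintro w' ⟨μ, hμ, hw'⟩ hlt
    rw [← mu0, ← hw'] at hlt
    rw [← mu1, ← hw']
    exact not_lt.1 fun hlt' =>
      hc'.wRank_notMem_Ioo hfin.symm h1.swap h0.swap hμ.swap _ ⟨hlt', hlt⟩

/-- rotations move agents to their next stable partners: if
`ρ` is a rotation exposed in a stable matching `μ0` then, for each `i`,
`m_{i-1}` is the least preferred stable partner of `w_i` among those she
strictly prefers to `m_i`, and `w_{i+1}` is the most preferred stable partner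
of `m_i` among those he strictly prefers less than `w_i`. -/
theorem rotation_moves_to_next_stable_partner {M W : Type*} [Fintype M] [Fintype W]
    (mkt : Market M W) (μ0 : Matching M W) (h0 : mkt.Stable μ0)
    (ρ : List (W × M)) (hρ : mkt.ExposedRotation μ0 ρ) (i : Fin ρ.length) :
    ((∃ μ : Matching M W, mkt.Stable μ ∧
        μ.nu (ρ.get i).1 = some (ρ.get (RotPrev ρ i)).2) ∧
      mkt.wRank (ρ.get i).1 (some (ρ.get i).2) <
        mkt.wRank (ρ.get i).1 (some (ρ.get (RotPrev ρ i)).2) ∧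
      (∀ m' : M, (∃ μ : Matching M W, mkt.Stable μ ∧ μ.nu (ρ.get i).1 = some m') →
        mkt.wRank (ρ.get i).1 (some (ρ.get i).2) < mkt.wRank (ρ.get i).1 (some m') →
        mkt.wRank (ρ.get i).1 (some (ρ.get (RotPrev ρ i)).2) ≤
          mkt.wRank (ρ.get i).1 (some m'))) ∧
    ((∃ μ : Matching M W, mkt.Stable μ ∧
        μ.mu (ρ.get i).2 = some (ρ.get (RotNext ρ i)).1) ∧
      mkt.mRank (ρ.get i).2 (some (ρ.get (RotNext ρ i)).1) <
        mkt.mRank (ρ.get i).2 (some (ρ.get i).1) ∧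
      (∀ w' : W, (∃ μ : Matching M W, mkt.Stable μ ∧ μ.mu (ρ.get i).2 = some w') →
        mkt.mRank (ρ.get i).2 (some w') < mkt.mRank (ρ.get i).2 (some (ρ.get i).1) →
        mkt.mRank (ρ.get i).2 (some w') ≤
          mkt.mRank (ρ.get i).2 (some (ρ.get (RotNext ρ i)).1))) := by
  exact rotation_moves_to_next_stable_partner_general (Or.inl inferInstance) mkt μ0 h0 ρ hρ i
end
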